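/- Define on ℝ³ the quadratic vector field R = (R^x, R^y, R^z) by R^x(x,y,z) = [−Δ_xxR^x/6 + (1/2)(V_y^1 − V_y^2 + V_y^3 − V_y^4 − V_z^1 − V_z^2 + V_z^3 + V_z^4)] + (−V_y^1 + V_y^2 + V_y^3 − V_y^4 + V_z^1 − V_z^2 − V_z^3 + V_z^4)·x + Δ_yR^x·y + Δ_zR^x·z + Δ_xxR^x(x² − 1/12) + Δ_yyR^x(y² − 1/12) + Δ_zzR^x(z² − 1/12) + Δ_xyR^x·xy + Δ_yzR^x·yz + Δ_xzR^x·xz, with R^y and R^z defined by the analogous cyclic formulas (given in the context). Then the divergence ∂_xR^x + ∂_yR^y + ∂_zR^z vanishes identically on ℝ³ if and only if the three linear relations hold: 2Δ_xxR^x + Δ_xyR^y + Δ_xzR^z = 0, Δ_xyR^x + 2Δ_yyR^y + Δ_yzR^z = 0, and Δ_xzR^x + Δ_yzR^y + 2Δ_zzR^z = 0. (The constant part of the divergence vanishes automatically for all values of the twelve edge parameters.) -/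

import Mathlib

/-- A generic quadratic scalar field on ℝ³ in the Legendre-type basis used for
the reconstructed curl components (eqns. 3.21–3.23). -/
noncomputable def quadField (c0 cx cy cz qxx qyy qzz qxy qyz qxz x y z : ℝ) : ℝ :=
  c0 + cx * x + cy * y + cz * z +
    qxx * (x ^ 2 - 1 / 12) + qyy * (y ^ 2 - 1 / 12) + qzz * (z ^ 2 - 1 / 12) +
    qxy * (x * y) + qyz * (y * z) + qxz * (x * z)

/-!
The divergence of a quadratic vector field is an affine function of position, so it vanishes
identically exactly when its constant term and its three slopes do. The slopes are the left-hand
sides of the moment relations. The constant term is the sum of the three diagonal linear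
coefficients, in which every edge parameter occurs twice, with opposite signs.
-/

theorem hasDerivAt_quadratic {𝕜 : Type*} [NontriviallyNormedField 𝕜] (a b c t : 𝕜) :
    HasDerivAt (fun s => a + b * s + c * s ^ 2) (b + 2 * c * t) t := by
  have hlin : HasDerivAt (fun s => a + b * s) b t := by
    simpa using ((hasDerivAt_id' t).const_mul b).const_add a
  have hsq : HasDerivAt (fun s => c * s ^ 2) (2 * c * t) t := by
    simpa [mul_comm, mul_left_comm] using (hasDerivAt_pow 2 t).const_mul c
  exact hlin.add hsq

theorem forall_add_dotProduct_eq_zero_iff {ι R : Type*} [Fintype ι] [Semiring R]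
    {c : R} {a : ι → R} : (∀ v : ι → R, c + a ⬝ᵥ v = 0) ↔ c = 0 ∧ a = 0 := by
  constructor
  · intro h
    have hc : c = 0 := by simpa using h 0
    exact ⟨hc, dotProduct_eq_zero_iff.mp fun v => by simpa [hc] using h v⟩
  · rintro ⟨rfl, rfl⟩ v
    simp

section QuadField

variable (c cx cy cz qxx qyy qzz qxy qyz qxz x y z : ℝ)

theorem quadField_rotate :
    quadField c cx cy cz qxx qyy qzz qxy qyz qxz x y z =
      quadField c cy cz cx qyy qzz qxx qyz qxz qxy y z x := by
  simp only [quadField]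
  ring

theorem deriv_quadField_x :
    deriv (fun x' => quadField c cx cy cz qxx qyy qzz qxy qyz qxz x' y z) x =
      cx + qxy * y + qxz * z + 2 * qxx * x := by
  have hquad : (fun x' => quadField c cx cy cz qxx qyy qzz qxy qyz qxz x' y z) = fun x' =>
      quadField c cx cy cz qxx qyy qzz qxy qyz qxz 0 y z +
        (cx + qxy * y + qxz * z) * x' + qxx * x' ^ 2 := by
    funext x'
    simp only [quadField]
    ring
  rw [hquad, (hasDerivAt_quadratic _ _ _ x).deriv]

theorem deriv_quadField_y :
    deriv (fun y' => quadField c cx cy cz qxx qyy qzz qxy qyz qxz x y' z) y =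
      cy + qyz * z + qxy * x + 2 * qyy * y := by
  -- Naming `c cx` stops the rewriting from rotating a second time.
  simp_rw [quadField_rotate c cx]
  exact deriv_quadField_x ..

theorem deriv_quadField_z :
    deriv (fun z' => quadField c cx cy cz qxx qyy qzz qxy qyz qxz x y z') z =
      cz + qxz * x + qyz * y + 2 * qzz * z := by
  simp_rw [quadField_rotate c cx]
  exact deriv_quadField_y ..

end QuadField

section Divergence

variable {u ux uy uz uxx uyy uzz uxy uyz uxz
  v vx vy vz vxx vyy vzz vxy vyz vxz
  w wx wy wz wxx wyy wzz wxy wyz wxz : ℝ}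

theorem divergence_quadField (x y z : ℝ) :
    deriv (fun x' => quadField u ux uy uz uxx uyy uzz uxy uyz uxz x' y z) x +
      deriv (fun y' => quadField v vx vy vz vxx vyy vzz vxy vyz vxz x y' z) y +
      deriv (fun z' => quadField w wx wy wz wxx wyy wzz wxy wyz wxz x y z') z =
    (ux + vy + wz) +
      ![2 * uxx + vxy + wxz, uxy + 2 * vyy + wyz, uxz + vyz + 2 * wzz] ⬝ᵥ ![x, y, z] := by
  rw [deriv_quadField_x, deriv_quadField_y, deriv_quadField_z, Matrix.vec3_dotProduct']
  ring

theorem divergence_quadField_eq_zero_iff :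
    (∀ x y z : ℝ,
      deriv (fun x' => quadField u ux uy uz uxx uyy uzz uxy uyz uxz x' y z) x +
        deriv (fun y' => quadField v vx vy vz vxx vyy vzz vxy vyz vxz x y' z) y +
        deriv (fun z' => quadField w wx wy wz wxx wyy wzz wxy wyz wxz x y z') z = 0) ↔
    ux + vy + wz = 0 ∧
      2 * uxx + vxy + wxz = 0 ∧ uxy + 2 * vyy + wyz = 0 ∧ uxz + vyz + 2 * wzz = 0 := by
  simp_rw [divergence_quadField]
  refine ((FinVec.forall_iff fun p : Fin 3 → ℝ => _ + _ ⬝ᵥ p = 0).trans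
    forall_add_dotProduct_eq_zero_iff).trans ?_
  simp only [Matrix.cons_eq_zero_iff, Matrix.zero_empty, and_true]

end Divergence

/-- the quadratic reconstructed curl field (eqns. 3.21–3.23) is
divergence-free on all of ℝ³ if and only if the three linear moment relations
(eqn. 3.24) hold; the constant part of the divergence vanishes automatically. -/
theorem stmt_11
    (vx1 vx2 vx3 vx4 vy1 vy2 vy3 vy4 vz1 vz2 vz3 vz4
      dyRx dzRx dxxRx dyyRx dzzRx dxyRx dyzRx dxzRx
      dxRy dzRy dxxRy dyyRy dzzRy dxyRy dyzRy dxzRy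
      dxRz dyRz dxxRz dyyRz dzzRz dxyRz dyzRz dxzRz : ℝ) :
    (∀ x y z : ℝ,
      deriv (fun x' : ℝ =>
        quadField (-dxxRx / 6 + (1 / 2) * (vy1 - vy2 + vy3 - vy4 - vz1 - vz2 + vz3 + vz4))
          (-vy1 + vy2 + vy3 - vy4 + vz1 - vz2 - vz3 + vz4) dyRx dzRx
          dxxRx dyyRx dzzRx dxyRx dyzRx dxzRx x' y z) x +
      deriv (fun y' : ℝ =>
        quadField (-dyyRy / 6 + (1 / 2) * (vz1 - vz2 + vz3 - vz4 - vx1 - vx2 + vx3 + vx4))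
          dxRy (-vz1 + vz2 + vz3 - vz4 + vx1 - vx2 - vx3 + vx4) dzRy
          dxxRy dyyRy dzzRy dxyRy dyzRy dxzRy x y' z) y +
      deriv (fun z' : ℝ =>
        quadField (-dzzRz / 6 + (1 / 2) * (vx1 - vx2 + vx3 - vx4 - vy1 - vy2 + vy3 + vy4))
          dxRz dyRz (-vx1 + vx2 + vx3 - vx4 + vy1 - vy2 - vy3 + vy4)
          dxxRz dyyRz dzzRz dxyRz dyzRz dxzRz x y z') z = 0) ↔
    (2 * dxxRx + dxyRy + dxzRz = 0 ∧
      dxyRx + 2 * dyyRy + dyzRz = 0 ∧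
      dxzRx + dyzRy + 2 * dzzRz = 0) := by
  have edge_parameters_cancel :
      (-vy1 + vy2 + vy3 - vy4 + vz1 - vz2 - vz3 + vz4) +
        (-vz1 + vz2 + vz3 - vz4 + vx1 - vx2 - vx3 + vx4) +
        (-vx1 + vx2 + vx3 - vx4 + vy1 - vy2 - vy3 + vy4) = 0 := by
    ring
  rw [divergence_quadField_eq_zero_iff]
  exact and_iff_right edge_parameters_cancel
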